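/- arXiv:1507.05304 — 7 statements merged into one kernel-verified Lean document; each statement's English description precedes it below -/
import Mathlib

section
/- Popoviciu's inequality: a continuous real-valued function f defined on an interval I ⊆ ℝ is convex if and only if for all x, y, z ∈ I one has (f(x)+f(y)+f(z))/3 + f((x+y+z)/3) ≥ (2/3)·(f((x+y)/2) + f((y+z)/2) + f((z+x)/2)). -/
/-- Popoviciu's inequality for a convex function, when `x` and `y` lie on the same side of the
mean of `x`, `y`, `z`. -/
lemma ConvexOn.popoviciu_of_same_side {I : Set ℝ} {f : ℝ → ℝ} (hf : ConvexOn ℝ I f)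
    {x y z : ℝ} (hx : x ∈ I) (hy : y ∈ I) (hz : z ∈ I)
    (hside : 0 ≤ ((x + y + z) / 3 - x) * ((x + y + z) / 3 - y)) :
    (2 / 3) * (f ((x + y) / 2) + f ((y + z) / 2) + f ((z + x) / 2)) ≤
      (f x + f y + f z) / 3 + f ((x + y + z) / 3) := by
  obtain ⟨m, hm⟩ : ∃ m, m = (x + y + z) / 3 := ⟨_, rfl⟩
  rw [← hm] at hside ⊢
  have hmI : m ∈ I := by
    have hxy : (1 / 2 : ℝ) • x + (1 / 2 : ℝ) • y ∈ I :=
      hf.1 hx hy (by norm_num) (by norm_num) (by norm_num)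
    have h := hf.1 hxy hz (show (0 : ℝ) ≤ 2 / 3 by norm_num)
      (show (0 : ℝ) ≤ 1 / 3 by norm_num) (by norm_num)
    simp only [smul_eq_mul] at h
    convert h using 1
    rw [hm]
    ring
  obtain ⟨w, hw0, hw1, hw⟩ : ∃ w : ℝ, 0 ≤ w ∧ w ≤ 1 ∧ m - x = w * (z - m) := by
    have hsum : z - m = (m - x) + (m - y) := by rw [hm]; ring
    rw [hsum]
    rcases mul_nonneg_iff.1 hside with ⟨hp, hq⟩ | ⟨hp, hq⟩
    · rcases (add_nonneg hp hq).eq_or_lt with h0 | h0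
      · exact ⟨0, le_rfl, zero_le_one, by linarith⟩
      · exact ⟨(m - x) / ((m - x) + (m - y)), div_nonneg hp h0.le,
          (div_le_one h0).2 (by linarith), (div_mul_cancel₀ _ h0.ne').symm⟩
    · rcases (add_nonpos hp hq).eq_or_lt with h0 | h0
      · exact ⟨0, le_rfl, zero_le_one, by linarith⟩
      · exact ⟨(m - x) / ((m - x) + (m - y)), div_nonneg_of_nonpos hp h0.le,
          (div_le_one_of_neg h0).2 (by linarith), (div_mul_cancel₀ _ h0.ne).symm⟩
  have hxy := hf.2 hx hy (show (0 : ℝ) ≤ 1 / 2 by norm_num)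
    (show (0 : ℝ) ≤ 1 / 2 by norm_num) (by norm_num)
  have hyz := hf.2 hmI hz (show 0 ≤ 1 - w / 2 by linarith) (show 0 ≤ w / 2 by linarith) (by ring)
  have hzx := hf.2 hmI hz (show 0 ≤ (1 + w) / 2 by linarith) (show 0 ≤ (1 - w) / 2 by linarith)
    (by ring)
  simp only [smul_eq_mul] at hxy hyz hzx
  rw [show 1 / 2 * x + 1 / 2 * y = (x + y) / 2 by ring] at hxy
  rw [show (1 - w / 2) * m + w / 2 * z = (y + z) / 2 by linarith] at hyz
  rw [show (1 + w) / 2 * m + (1 - w) / 2 * z = (z + x) / 2 by linarith] at hzx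
  linarith

/-- **Popoviciu's inequality** for a convex function. -/
lemma ConvexOn.popoviciu {I : Set ℝ} {f : ℝ → ℝ} (hf : ConvexOn ℝ I f)
    {x y z : ℝ} (hx : x ∈ I) (hy : y ∈ I) (hz : z ∈ I) :
    (2 / 3) * (f ((x + y) / 2) + f ((y + z) / 2) + f ((z + x) / 2)) ≤
      (f x + f y + f z) / 3 + f ((x + y + z) / 3) := by
  have hyzx : y + z + x = x + y + z := by ring
  have hzxy : z + x + y = x + y + z := by ring
  have h₁ := hf.popoviciu_of_same_side hx hy hz
  have h₂ := hf.popoviciu_of_same_side hy hz hx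
  have h₃ := hf.popoviciu_of_same_side hz hx hy
  rw [hyzx] at h₂
  rw [hzxy] at h₃
  rcases le_total x ((x + y + z) / 3) with hx' | hx' <;>
  rcases le_total y ((x + y + z) / 3) with hy' | hy' <;>
  rcases le_total z ((x + y + z) / 3) with hz' | hz' <;>
  first
  | exact h₁ (by nlinarith)
  | linarith [h₂ (by nlinarith)]
  | linarith [h₃ (by nlinarith)]

/-- A continuous function on `[a, b]`, nonpositive at the endpoints and satisfying
`4 g m ≤ g (m - t) + 3 g (m + t / 3)` inside, is nonpositive. -/
lemma nonpos_of_four_mul_le {a b : ℝ} {g : ℝ → ℝ} (hg : ContinuousOn g (Set.Icc a b))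
    (ha : g a ≤ 0) (hb : g b ≤ 0)
    (h : ∀ m t, 0 < t → a ≤ m - t → m + t ≤ b → 4 * g m ≤ g (m - t) + 3 * g (m + t / 3))
    {c : ℝ} (hc : c ∈ Set.Icc a b) : g c ≤ 0 := by
  by_contra! hpos
  obtain ⟨p, hp, hmax⟩ := isCompact_Icc.exists_isMaxOn ⟨c, hc⟩ hg
  have hcompact : IsCompact (Set.Icc a b ∩ g ⁻¹' {g p}) :=
    isCompact_Icc.of_isClosed_subset (hg.preimage_isClosed_of_isClosed isClosed_Icc
      isClosed_singleton) Set.inter_subset_left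
  obtain ⟨m, ⟨hmI, hgm⟩, hleast⟩ := hcompact.exists_isLeast ⟨p, hp, rfl⟩
  have hgm : g m = g p := hgm
  have hgp : 0 < g p := hpos.trans_le (hmax hc)
  have ham : a < m := hmI.1.lt_of_ne (by rintro rfl; linarith)
  have hmb : m < b := hmI.2.lt_of_ne (by rintro rfl; linarith)
  obtain ⟨t, ht0, hta, htb⟩ : ∃ t, 0 < t ∧ t ≤ m - a ∧ t ≤ b - m :=
    ⟨min (m - a) (b - m), lt_min (by linarith) (by linarith), min_le_left _ _, min_le_right _ _⟩
  have hleft : m - t ∈ Set.Icc a b := ⟨by linarith, by linarith⟩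
  have hright : m + t / 3 ∈ Set.Icc a b := ⟨by linarith, by linarith⟩
  have hlt : g (m - t) < g p :=
    (hmax hleft : g (m - t) ≤ g p).lt_of_ne fun heq => by linarith [hleast ⟨hleft, heq⟩]
  have hle : g (m + t / 3) ≤ g p := hmax hright
  linarith [h m t ht0 (by linarith) (by linarith)]

/-- A continuous function on an interval satisfying Popoviciu's inequality is convex. -/
lemma convexOn_of_popoviciu {I : Set ℝ} (hI : Convex ℝ I) {f : ℝ → ℝ} (hf : ContinuousOn f I)
    (h : ∀ x ∈ I, ∀ y ∈ I, ∀ z ∈ I,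
      (2 / 3) * (f ((x + y) / 2) + f ((y + z) / 2) + f ((z + x) / 2)) ≤
        (f x + f y + f z) / 3 + f ((x + y + z) / 3)) :
    ConvexOn ℝ I f := by
  refine LinearOrder.convexOn_of_lt hI fun a ha b hb hab u v hu hv huv => ?_
  have hsub : Set.Icc a b ⊆ I := hI.ordConnected.out ha hb
  obtain ⟨k, hk⟩ : ∃ k, k * (b - a) = f b - f a :=
    ⟨_, div_mul_cancel₀ _ (sub_pos.2 hab).ne'⟩
  have hv' : u = 1 - v := by linarith
  subst hv'
  have hc : (1 - v) * a + v * b ∈ Set.Icc a b := ⟨by nlinarith, by nlinarith⟩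
  have key := nonpos_of_four_mul_le (g := fun s => f s - f a - k * (s - a))
    (((hf.mono hsub).sub continuousOn_const).sub (by fun_prop)) (by simp) (by simp [hk])
    (fun m t ht hma hmb => ?_) hc
  · simp only [smul_eq_mul]
    have hkv : k * ((1 - v) * a + v * b - a) = v * (f b - f a) := by rw [← hk]; ring
    simp only [hkv] at key
    linarith
  · have hy : m + t ∈ I := hsub ⟨by linarith, hmb⟩
    have hP := h (m - t) (hsub ⟨hma, by linarith⟩) (m + t) hy (m + t) hy
    rw [show (m - t + (m + t)) / 2 = m by ring, show (m + t + (m - t)) / 2 = m by ring,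
      show (m + t + (m + t)) / 2 = m + t by ring,
      show (m - t + (m + t) + (m + t)) / 3 = m + t / 3 by ring] at hP
    linarith

/-- Popoviciu's inequality: a continuous real-valued function `f` on an interval
`I ⊆ ℝ` is convex iff it satisfies Popoviciu's inequality on `I`. -/
theorem popoviciu_iff_convex (I : Set ℝ) (hI : Convex ℝ I) (f : ℝ → ℝ)
    (hf : ContinuousOn f I) :
    ConvexOn ℝ I f ↔
      ∀ x ∈ I, ∀ y ∈ I, ∀ z ∈ I,
        (f x + f y + f z) / 3 + f ((x + y + z) / 3) ≥
          (2 / 3) * (f ((x + y) / 2) + f ((y + z) / 2) + f ((z + x) / 2)) :=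
  ⟨fun h _ hx _ hy _ hz => h.popoviciu hx hy hz, convexOn_of_popoviciu hI hf⟩
end

section
/- Aczél's lemma (increasing case): let φ be a continuous strictly monotone function on an interval I ⊆ ℝ, ψ a continuous strictly increasing function on an interval J ⊆ ℝ, and f : I → J a continuous function. Then f satisfies f(φ⁻¹((φ(x)+φ(y))/2)) ≤ ψ⁻¹((ψ(f(x))+ψ(f(y)))/2) for all x, y ∈ I if and only if the function ψ ∘ f ∘ φ⁻¹ is convex on φ(I) in the usual sense (and the analogous equivalence holds with ≥ and concavity). -/
open Set

/-- A continuous midpoint-convex function on `[0, 1]` vanishing at both endpoints is nonpositive. -/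
lemma nonpos_of_midpoint_le {h : ℝ → ℝ} (hc : ContinuousOn h (Icc 0 1))
    (hm : ∀ s ∈ Icc (0 : ℝ) 1, ∀ t ∈ Icc (0 : ℝ) 1, h ((s + t) / 2) ≤ (h s + h t) / 2)
    (h0 : h 0 = 0) (h1 : h 1 = 0) {t : ℝ} (ht : t ∈ Icc (0 : ℝ) 1) : h t ≤ 0 := by
  obtain ⟨m, hmI, hmax⟩ := isCompact_Icc.exists_isMaxOn ⟨t, ht⟩ hc
  by_contra! hpos
  have hM : 0 < h m := hpos.trans_le (hmax ht)
  have hK : IsCompact (Icc (0 : ℝ) 1 ∩ h ⁻¹' {h m}) :=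
    isCompact_Icc.of_isClosed_subset
      (hc.preimage_isClosed_of_isClosed isClosed_Icc isClosed_singleton) inter_subset_left
  obtain ⟨a, ⟨⟨ha0, ha1⟩, ha⟩, hleast⟩ := hK.exists_isLeast ⟨m, hmI, rfl⟩
  replace ha : h a = h m := ha
  have ha0' : 0 < a := ha0.lt_of_ne (by rintro rfl; linarith)
  have ha1' : a < 1 := ha1.lt_of_ne (by rintro rfl; linarith)
  obtain ⟨d, hd, hda, hda'⟩ : ∃ d, 0 < d ∧ d ≤ a ∧ d ≤ 1 - a :=
    ⟨min a (1 - a), lt_min ha0' (by linarith), min_le_left _ _, min_le_right _ _⟩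
  have hl : a - d ∈ Icc (0 : ℝ) 1 := ⟨by linarith, by linarith⟩
  have hr : a + d ∈ Icc (0 : ℝ) 1 := ⟨by linarith, by linarith⟩
  have hlt : h (a - d) < h m := (hmax hl).lt_of_ne fun he => by
    have := hleast ⟨hl, he⟩
    linarith
  have hle : h (a + d) ≤ h m := hmax hr
  have hmid := hm _ hl _ hr
  rw [show (a - d + (a + d)) / 2 = a by ring] at hmid
  linarith

/-- A continuous midpoint-convex function on a convex set of reals is convex. -/
lemma convexOn_of_midpoint_le {S : Set ℝ} {g : ℝ → ℝ} (hS : Convex ℝ S) (hc : ContinuousOn g S)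
    (hm : ∀ x ∈ S, ∀ y ∈ S, g ((x + y) / 2) ≤ (g x + g y) / 2) : ConvexOn ℝ S g := by
  refine ⟨hS, fun x hx y hy a b ha hb hab => ?_⟩
  have hmem : MapsTo (fun t : ℝ => (1 - t) * x + t * y) (Icc 0 1) S := fun t ht =>
    hS hx hy (sub_nonneg.2 ht.2) ht.1 (by ring)
  have key := nonpos_of_midpoint_le
    (h := fun t => g ((1 - t) * x + t * y) - ((1 - t) * g x + t * g y))
    ((hc.comp (by fun_prop) hmem).sub (by fun_prop))
    (fun s hs t ht => by
      have := hm _ (hmem hs) _ (hmem ht)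
      rw [show ((1 - s) * x + s * y + ((1 - t) * x + t * y)) / 2
        = (1 - (s + t) / 2) * x + (s + t) / 2 * y by ring] at this
      linarith)
    (by simp) (by simp) (t := b) ⟨hb, by linarith⟩
  obtain rfl : a = 1 - b := by linarith
  simpa using key

/-- A left inverse of a strictly increasing function on an interval is continuous on the image,
provided the image is an interval. -/
lemma StrictMonoOn.continuousOn_leftInvOn {I : Set ℝ} {φ φinv : ℝ → ℝ} (hφ : StrictMonoOn φ I)
    (hI : I.OrdConnected) (hφI : (φ '' I).OrdConnected) (hinv : LeftInvOn φinv φ I) :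
    ContinuousOn φinv (φ '' I) := by
  rw [continuousOn_iff_continuous_domRestrict]
  convert continuous_subtype_val.comp (hφ.orderIso φ I).symm.continuous using 1
  ext y
  obtain ⟨x, rfl⟩ := (hφ.orderIso φ I).surjective y
  simp only [domRestrict_apply, Function.comp_apply, OrderIso.symm_apply_apply]
  exact hinv x.2

/-- A left inverse of a strictly decreasing function on an interval is continuous on the image,
provided the image is an interval. -/
lemma StrictAntiOn.continuousOn_leftInvOn {I : Set ℝ} {φ φinv : ℝ → ℝ} (hφ : StrictAntiOn φ I)
    (hI : I.OrdConnected) (hφI : (φ '' I).OrdConnected) (hinv : LeftInvOn φinv φ I) :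
    ContinuousOn φinv (φ '' I) := by
  have himage : (fun x => -φ x) '' I = -(φ '' I) := by
    rw [← image_neg_eq_neg, image_image]
  have hc : ContinuousOn (fun y => φinv (-y)) (-(φ '' I)) := by
    rw [← himage]
    refine StrictMonoOn.continuousOn_leftInvOn hφ.neg hI ?_ fun x hx => by simp [hinv hx]
    rw [himage]
    exact hφI.convex.neg.ordConnected
  simpa [Function.comp_def] using
    hc.comp (t := -(φ '' I)) continuousOn_neg fun y hy => by simpa using hy

/-- For `ψ` strictly increasing on `J` with left inverse `ψinv`, comparing a point of `J` with
`ψinv v` is the same as comparing its image under `ψ` with `v`. -/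
lemma StrictMonoOn.le_and_ge_leftInvOn_iff {J : Set ℝ} {ψ ψinv : ℝ → ℝ} (hψ : StrictMonoOn ψ J)
    (hinv : LeftInvOn ψinv ψ J) {u v : ℝ} (hu : u ∈ J) (hv : v ∈ ψ '' J) :
    (u ≤ ψinv v ↔ ψ u ≤ v) ∧ (ψinv v ≤ u ↔ v ≤ ψ u) := by
  obtain ⟨w, hw, rfl⟩ := hv
  rw [hinv hw, hψ.le_iff_le hu hw, hψ.le_iff_le hw hu]
  exact ⟨Iff.rfl, Iff.rfl⟩

/-- Aczél's lemma (increasing case): for `φ` continuous and strictly monotone on the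
interval `I`, `ψ` continuous and strictly increasing on the interval `J`, and a
continuous `f : I → J`, the function `f` is `(M_φ, M_ψ)`-convex (resp. concave) iff
`ψ ∘ f ∘ φ⁻¹` is convex (resp. concave) on `φ(I)`. -/
theorem aczel_lemma_increasing (I J : Set ℝ) (hI : Convex ℝ I) (hJ : Convex ℝ J)
    (φ ψ f φinv ψinv : ℝ → ℝ)
    (hφc : ContinuousOn φ I) (hφm : StrictMonoOn φ I ∨ StrictAntiOn φ I)
    (hψc : ContinuousOn ψ J) (hψm : StrictMonoOn ψ J)
    (hfc : ContinuousOn f I) (hfm : Set.MapsTo f I J)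
    (hφinv : ∀ x ∈ I, φinv (φ x) = x) (hφinvm : Set.MapsTo φinv (φ '' I) I)
    (hψinv : ∀ y ∈ J, ψinv (ψ y) = y) (hψinvm : Set.MapsTo ψinv (ψ '' J) J) :
    ((∀ x ∈ I, ∀ y ∈ I,
        f (φinv ((φ x + φ y) / 2)) ≤ ψinv ((ψ (f x) + ψ (f y)) / 2)) ↔
      ConvexOn ℝ (φ '' I) (ψ ∘ f ∘ φinv)) ∧
    ((∀ x ∈ I, ∀ y ∈ I,
        f (φinv ((φ x + φ y) / 2)) ≥ ψinv ((ψ (f x) + ψ (f y)) / 2)) ↔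
      ConcaveOn ℝ (φ '' I) (ψ ∘ f ∘ φinv)) := by
  have himage {K : Set ℝ} {χ : ℝ → ℝ} (hK : Convex ℝ K) (hχ : ContinuousOn χ K) :
      Convex ℝ (χ '' K) :=
    (hK.isPreconnected.image χ hχ).ordConnected.convex
  have hS := himage hI hφc
  have hT := himage hJ hψc
  have hmid {T : Set ℝ} (hT : Convex ℝ T) {u v : ℝ} (hu : u ∈ T) (hv : v ∈ T) :
      (u + v) / 2 ∈ T := by
    convert hT hu hv (by norm_num : (0 : ℝ) ≤ 1 / 2) (by norm_num : (0 : ℝ) ≤ 1 / 2)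
      (by norm_num) using 1
    simp only [smul_eq_mul]
    ring
  have hφinvc : ContinuousOn φinv (φ '' I) := hφm.elim
    (fun h => h.continuousOn_leftInvOn hI.ordConnected hS.ordConnected hφinv)
    (fun h => h.continuousOn_leftInvOn hI.ordConnected hS.ordConnected hφinv)
  have hgc : ContinuousOn (ψ ∘ f ∘ φinv) (φ '' I) :=
    hψc.comp (hfc.comp hφinvc hφinvm) (hfm.comp hφinvm)
  have hcmp {x y : ℝ} (hx : x ∈ I) (hy : y ∈ I) :=
    hψm.le_and_ge_leftInvOn_iff hψinv
      (hfm (hφinvm (hmid hS (mem_image_of_mem φ hx) (mem_image_of_mem φ hy))))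
      (hmid hT (mem_image_of_mem ψ (hfm hx)) (mem_image_of_mem ψ (hfm hy)))
  refine ⟨⟨fun h => ?_, fun h x hx y hy => ?_⟩, ⟨fun h => ?_, fun h x hx y hy => ?_⟩⟩
  · refine convexOn_of_midpoint_le hS hgc ?_
    rintro _ ⟨x, hx, rfl⟩ _ ⟨y, hy, rfl⟩
    simpa [hφinv x hx, hφinv y hy] using (hcmp hx hy).1.1 (h x hx y hy)
  · have := h.2 (mem_image_of_mem φ hx) (mem_image_of_mem φ hy)
      (by norm_num : (0 : ℝ) ≤ 1 / 2) (by norm_num : (0 : ℝ) ≤ 1 / 2) (by norm_num)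
    simp only [Function.comp_apply, smul_eq_mul, hφinv x hx, hφinv y hy, ← mul_add] at this
    rw [one_div_mul_eq_div, one_div_mul_eq_div] at this
    exact (hcmp hx hy).1.2 this
  · refine neg_convexOn_iff.1 (convexOn_of_midpoint_le hS hgc.neg ?_)
    rintro _ ⟨x, hx, rfl⟩ _ ⟨y, hy, rfl⟩
    have := (hcmp hx hy).2.1 (h x hx y hy)
    simp only [Pi.neg_apply, Function.comp_apply, hφinv x hx, hφinv y hy]
    linarith
  · have := h.2 (mem_image_of_mem φ hx) (mem_image_of_mem φ hy)
      (by norm_num : (0 : ℝ) ≤ 1 / 2) (by norm_num : (0 : ℝ) ≤ 1 / 2) (by norm_num)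
    simp only [Function.comp_apply, smul_eq_mul, hφinv x hx, hφinv y hy, ← mul_add] at this
    rw [one_div_mul_eq_div, one_div_mul_eq_div] at this
    exact (hcmp hx hy).2.2 this
end

section
/- Aczél's lemma (decreasing case): let φ be a continuous strictly monotone function on an interval I ⊆ ℝ, ψ a continuous strictly decreasing function on an interval J ⊆ ℝ, and f : I → J a continuous function. Then f satisfies f(φ⁻¹((φ(x)+φ(y))/2)) ≤ ψ⁻¹((ψ(f(x))+ψ(f(y)))/2) for all x, y ∈ I if and only if the function ψ ∘ f ∘ φ⁻¹ is concave on φ(I) in the usual sense (and the analogous equivalence holds with ≥ and convexity). -/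
/-- A continuous midpoint-convex function on `[0, 1]` that is nonpositive at both endpoints
is nonpositive. -/
theorem nonpos_of_continuousOn_of_midpoint_le {h : ℝ → ℝ} (hc : ContinuousOn h (Set.Icc 0 1))
    (hm : ∀ s ∈ Set.Icc (0 : ℝ) 1, ∀ t ∈ Set.Icc (0 : ℝ) 1, h ((s + t) / 2) ≤ (h s + h t) / 2)
    (h0 : h 0 ≤ 0) (h1 : h 1 ≤ 0) {t : ℝ} (ht : t ∈ Set.Icc (0 : ℝ) 1) : h t ≤ 0 := by
  obtain ⟨m, hmI, hmax⟩ := isCompact_Icc.exists_isMaxOn ⟨t, ht⟩ hc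
  have hmax' : ∀ u ∈ Set.Icc (0 : ℝ) 1, h u ≤ h m := fun u hu => hmax hu
  refine (hmax' t ht).trans ?_
  by_contra! hpos
  -- Compare the least maximizer with two points of `[0, 1]` symmetric about it.
  have hK : IsCompact (Set.Icc (0 : ℝ) 1 ∩ h ⁻¹' {h m}) :=
    isCompact_Icc.of_isClosed_subset
      (hc.preimage_isClosed_of_isClosed isClosed_Icc isClosed_singleton) Set.inter_subset_left
  obtain ⟨a, ⟨haI, ham⟩, hleast⟩ := hK.exists_isLeast ⟨m, hmI, rfl⟩
  have ham : h a = h m := ham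
  have ha0 : 0 < a := lt_of_le_of_ne haI.1 (by rintro rfl; linarith)
  have ha1 : a < 1 := lt_of_le_of_ne haI.2 (by rintro rfl; linarith)
  obtain ⟨d, hd, hda, hda'⟩ : ∃ d : ℝ, 0 < d ∧ d ≤ a ∧ d ≤ 1 - a :=
    ⟨min a (1 - a), lt_min ha0 (by linarith), min_le_left _ _, min_le_right _ _⟩
  have hl : a - d ∈ Set.Icc (0 : ℝ) 1 := ⟨by linarith, by linarith⟩
  have hr : a + d ∈ Set.Icc (0 : ℝ) 1 := ⟨by linarith, by linarith⟩
  have hlt : h (a - d) < h m := by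
    refine lt_of_le_of_ne (hmax' _ hl) fun heq => ?_
    have := hleast ⟨hl, heq⟩
    linarith
  have hmid := hm _ hl _ hr
  rw [show (a - d + (a + d)) / 2 = a by ring] at hmid
  linarith [hmax' _ hr]

/-- A continuous midpoint-convex function on a convex subset of `ℝ` is convex. -/
theorem convexOn_of_continuousOn_of_midpoint_le {s : Set ℝ} {g : ℝ → ℝ} (hs : Convex ℝ s)
    (hc : ContinuousOn g s)
    (hm : ∀ x ∈ s, ∀ y ∈ s, g ((x + y) / 2) ≤ (g x + g y) / 2) : ConvexOn ℝ s g := by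
  refine ⟨hs, fun x hx y hy a b ha hb hab => ?_⟩
  have hmem : ∀ t ∈ Set.Icc (0 : ℝ) 1, (1 - t) * x + t * y ∈ s := fun t ht =>
    hs hx hy (sub_nonneg.2 ht.2) ht.1 (sub_add_cancel _ _)
  have hcont : ContinuousOn
      (fun t : ℝ => g ((1 - t) * x + t * y) - ((1 - t) * g x + t * g y)) (Set.Icc 0 1) :=
    (hc.comp (by fun_prop) hmem).sub (by fun_prop)
  have key := nonpos_of_continuousOn_of_midpoint_le hcont (fun u hu v hv => ?_)
    (by simp) (by simp) (t := b) ⟨hb, by linarith⟩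
  · obtain rfl : a = 1 - b := by linarith
    simpa [sub_nonpos] using key
  · have := hm _ (hmem u hu) _ (hmem v hv)
    rw [show ((1 - u) * x + u * y + ((1 - v) * x + v * y)) / 2
      = (1 - (u + v) / 2) * x + (u + v) / 2 * y by ring] at this
    linarith

/-- For a continuous function on a convex set, convexity is equivalent to midpoint convexity. -/
theorem convexOn_iff_midpoint_le {s : Set ℝ} {g : ℝ → ℝ} (hs : Convex ℝ s)
    (hc : ContinuousOn g s) :
    ConvexOn ℝ s g ↔ ∀ x ∈ s, ∀ y ∈ s, g ((x + y) / 2) ≤ (g x + g y) / 2 := by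
  refine ⟨fun h x hx y hy => ?_, convexOn_of_continuousOn_of_midpoint_le hs hc⟩
  have := h.2 hx hy (show (0 : ℝ) ≤ 1 / 2 by norm_num) (show (0 : ℝ) ≤ 1 / 2 by norm_num)
    (by norm_num)
  simp only [smul_eq_mul] at this
  rw [show (x + y) / 2 = 1 / 2 * x + 1 / 2 * y by ring]
  linarith

/-- For a continuous function on a convex set, concavity is equivalent to midpoint concavity. -/
theorem concaveOn_iff_le_midpoint {s : Set ℝ} {g : ℝ → ℝ} (hs : Convex ℝ s)
    (hc : ContinuousOn g s) :
    ConcaveOn ℝ s g ↔ ∀ x ∈ s, ∀ y ∈ s, (g x + g y) / 2 ≤ g ((x + y) / 2) := by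
  rw [← neg_convexOn_iff, convexOn_iff_midpoint_le hs hc.neg]
  refine forall₂_congr fun x _ => forall₂_congr fun y _ => ?_
  simp only [Pi.neg_apply]
  constructor <;> intro h <;> linarith

/-- The image of a convex subset of `ℝ` under a continuous real function is convex. -/
theorem Convex.image_of_continuousOn {s : Set ℝ} {g : ℝ → ℝ} (hs : Convex ℝ s)
    (hc : ContinuousOn g s) : Convex ℝ (g '' s) :=
  Real.convex_iff_isPreconnected.2 (hs.isPreconnected.image g hc)

/-- A left inverse of a continuous strictly increasing function on an interval is continuous on
the image. -/
theorem StrictMonoOn.continuousOn_leftInverse {s : Set ℝ} {g ginv : ℝ → ℝ} (hs : Convex ℝ s)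
    (hc : ContinuousOn g s) (hg : StrictMonoOn g s) (hinv : ∀ x ∈ s, ginv (g x) = x) :
    ContinuousOn ginv (g '' s) := by
  have : s.OrdConnected := hs.ordConnected
  have : (g '' s).OrdConnected := (hs.image_of_continuousOn hc).ordConnected
  rw [continuousOn_iff_continuous_domRestrict]
  convert continuous_subtype_val.comp (hg.orderIso g s).symm.continuous using 1
  ext y
  obtain ⟨x, rfl⟩ := (hg.orderIso g s).surjective y
  have hx : ginv (hg.orderIso g s x) = x := hinv x x.2
  simpa using hx

/-- A left inverse of a continuous strictly decreasing function on an interval is continuous on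
the image. -/
theorem StrictAntiOn.continuousOn_leftInverse {s : Set ℝ} {g ginv : ℝ → ℝ} (hs : Convex ℝ s)
    (hc : ContinuousOn g s) (hg : StrictAntiOn g s) (hinv : ∀ x ∈ s, ginv (g x) = x) :
    ContinuousOn ginv (g '' s) := by
  have h : ContinuousOn (fun y => ginv (-y)) ((fun x => -g x) '' s) :=
    StrictMonoOn.continuousOn_leftInverse hs hc.neg hg.neg (by simpa using hinv)
  have hmaps : Set.MapsTo (fun y : ℝ => -y) (g '' s) ((fun x => -g x) '' s) := by
    rintro _ ⟨x, hx, rfl⟩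
    exact ⟨x, hx, rfl⟩
  simpa [Function.comp_def] using h.comp continuous_neg.continuousOn hmaps

/-- Aczél's lemma (decreasing case): for `φ` continuous and strictly monotone on the
interval `I`, `ψ` continuous and strictly decreasing on the interval `J`, and a
continuous `f : I → J`, the function `f` is `(M_φ, M_ψ)`-convex (resp. concave) iff
`ψ ∘ f ∘ φ⁻¹` is concave (resp. convex) on `φ(I)`. -/
theorem aczel_lemma_decreasing (I J : Set ℝ) (hI : Convex ℝ I) (hJ : Convex ℝ J)
    (φ ψ f φinv ψinv : ℝ → ℝ)
    (hφc : ContinuousOn φ I) (hφm : StrictMonoOn φ I ∨ StrictAntiOn φ I)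
    (hψc : ContinuousOn ψ J) (hψm : StrictAntiOn ψ J)
    (hfc : ContinuousOn f I) (hfm : Set.MapsTo f I J)
    (hφinv : ∀ x ∈ I, φinv (φ x) = x) (hφinvm : Set.MapsTo φinv (φ '' I) I)
    (hψinv : ∀ y ∈ J, ψinv (ψ y) = y) (hψinvm : Set.MapsTo ψinv (ψ '' J) J) :
    ((∀ x ∈ I, ∀ y ∈ I,
        f (φinv ((φ x + φ y) / 2)) ≤ ψinv ((ψ (f x) + ψ (f y)) / 2)) ↔
      ConcaveOn ℝ (φ '' I) (ψ ∘ f ∘ φinv)) ∧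
    ((∀ x ∈ I, ∀ y ∈ I,
        f (φinv ((φ x + φ y) / 2)) ≥ ψinv ((ψ (f x) + ψ (f y)) / 2)) ↔
      ConvexOn ℝ (φ '' I) (ψ ∘ f ∘ φinv)) := by
  have hs : Convex ℝ (φ '' I) := hI.image_of_continuousOn hφc
  have hφinvc : ContinuousOn φinv (φ '' I) := hφm.elim
    (fun h => h.continuousOn_leftInverse hI hφc hφinv)
    (fun h => h.continuousOn_leftInverse hI hφc hφinv)
  have hc : ContinuousOn (ψ ∘ f ∘ φinv) (φ '' I) :=
    hψc.comp (hfc.comp hφinvc hφinvm) (hfm.comp hφinvm)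
  have hmid : ∀ {s : Set ℝ}, Convex ℝ s → ∀ u ∈ s, ∀ v ∈ s, (u + v) / 2 ∈ s := by
    intro s hs u hu v hv
    rw [show (u + v) / 2 = (1 / 2 : ℝ) • u + (1 / 2 : ℝ) • v by simp only [smul_eq_mul]; ring]
    exact hs hu hv (by norm_num) (by norm_num) (by norm_num)
  have hleft : ∀ x ∈ I, ∀ y ∈ I, f (φinv ((φ x + φ y) / 2)) ∈ J := fun x hx y hy =>
    hfm (hφinvm (hmid hs _ ⟨x, hx, rfl⟩ _ ⟨y, hy, rfl⟩))
  have hright : ∀ x ∈ I, ∀ y ∈ I, (ψ (f x) + ψ (f y)) / 2 ∈ ψ '' J := fun x hx y hy =>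
    hmid (hJ.image_of_continuousOn hψc) _ ⟨f x, hfm hx, rfl⟩ _ ⟨f y, hfm hy, rfl⟩
  have hψψinv : ∀ z ∈ ψ '' J, ψ (ψinv z) = z := by
    rintro _ ⟨y, hy, rfl⟩
    rw [hψinv y hy]
  rw [concaveOn_iff_le_midpoint hs hc, convexOn_iff_midpoint_le hs hc]
  simp only [Set.forall_mem_image, Function.comp_apply]
  constructor <;> refine forall₂_congr fun x hx => forall₂_congr fun y hy => ?_
  · rw [← hψm.le_iff_ge (hψinvm (hright x hx y hy)) (hleft x hx y hy),
      hψψinv _ (hright x hx y hy), hφinv x hx, hφinv y hy]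
  · rw [ge_iff_le, ← hψm.le_iff_ge (hleft x hx y hy) (hψinvm (hright x hx y hy)),
      hψψinv _ (hright x hx y hy), hφinv x hx, hφinv y hy]
end

section
/- Popoviciu's inequality for h-convex functions: let h : (0,1) → (0,∞) be a concave function with h(λ) + h(1−λ) ≥ 1 for all λ ∈ (0,1), let I ⊆ ℝ be an interval, and let f : I → ℝ be a nonnegative h-convex function. Then for all x, y, z ∈ I: max{h(1/2), 2·h(1/4)}·(f(x) + f(y) + f(z)) + 2·h(3/4)·f((x+y+z)/3) ≥ f((x+y)/2) + f((y+z)/2) + f((z+x)/2). -/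
/-- Midpoint form of concavity on the unit interval. -/
lemma ConcaveOn.add_le_two_mul_midpoint {h : ℝ → ℝ}
    (hconc : ConcaveOn ℝ (Set.Ioo (0 : ℝ) 1) h) {a b c : ℝ}
    (ha : a ∈ Set.Ioo (0 : ℝ) 1) (hb : b ∈ Set.Ioo (0 : ℝ) 1) (hc : a + b = 2 * c) :
    h a + h b ≤ 2 * h c := by
  have key := hconc.2 ha hb (by norm_num : (0 : ℝ) ≤ 1 / 2) (by norm_num : (0 : ℝ) ≤ 1 / 2)
    (by norm_num)
  simp only [smul_eq_mul] at key
  rw [show (1 / 2 : ℝ) * a + 1 / 2 * b = c by linarith] at key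
  linarith

/-- Concavity of `l ↦ h l + h (1 - l)` between `0` and `1 / 2`, where the value at `0` is
replaced by the lower bound `1`. -/
lemma one_add_two_mul_half_le {h : ℝ → ℝ}
    (hconc : ConcaveOn ℝ (Set.Ioo (0 : ℝ) 1) h)
    (hsum : ∀ l ∈ Set.Ioo (0 : ℝ) 1, 1 ≤ h l + h (1 - l)) :
    1 + 2 * h (1 / 2) ≤ 2 * h (1 / 4) + 2 * h (3 / 4) := by
  have hquarter : 1 ≤ h (1 / 4) + h (3 / 4) := by
    have := hsum (1 / 4) (by norm_num)
    norm_num at this ⊢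
    exact this
  have hweight : ∀ w : ℝ, 0 ≤ w → w < 1 / 2 →
      w * (2 * h (1 / 2) - 1) ≤ h (1 / 4) + h (3 / 4) - 1 := by
    intro w hw0 hw
    obtain ⟨d, hd⟩ : ∃ d, d = (1 / 4 - w / 2) / (1 - w) := ⟨_, rfl⟩
    have hw1 : 0 < 1 - w := by linarith
    have hdw : (1 - w) * d = 1 / 4 - w / 2 := by rw [hd]; field_simp
    have hd0 : 0 < d := by rw [hd]; apply div_pos <;> linarith
    have hd1 : d < 1 := by rw [hd, div_lt_one hw1]; linarith
    have hhalf : (1 / 2 : ℝ) ∈ Set.Ioo (0 : ℝ) 1 := by norm_num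
    have left := hconc.2 ⟨hd0, hd1⟩ hhalf hw1.le hw0 (by ring)
    have right := hconc.2 (x := 1 - d) ⟨by linarith, by linarith⟩ hhalf hw1.le hw0 (by ring)
    simp only [smul_eq_mul] at left right
    rw [show (1 - w) * d + w * (1 / 2) = 1 / 4 by linarith] at left
    rw [show (1 - w) * (1 - d) + w * (1 / 2) = 3 / 4 by linarith] at right
    nlinarith [mul_le_mul_of_nonneg_left (hsum d ⟨hd0, hd1⟩) hw1.le]
  by_contra! hlt
  have hG : 0 < 2 * h (1 / 2) - 1 := by linarith
  obtain ⟨q, hq⟩ : ∃ q, q = (h (1 / 4) + h (3 / 4) - 1) / (2 * h (1 / 2) - 1) := ⟨_, rfl⟩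
  have hqG : q * (2 * h (1 / 2) - 1) = h (1 / 4) + h (3 / 4) - 1 := by rw [hq]; field_simp
  have hq0 : 0 ≤ q := by rw [hq]; apply div_nonneg <;> linarith
  have hq1 : q < 1 / 2 := by rw [hq, div_lt_iff₀ hG]; linarith
  have := hweight ((q + 1 / 2) / 2) (by linarith) (by linarith)
  nlinarith

/-- Popoviciu's inequality when the mean `m` of `x, y, z` lies between `y` and `z`, at most half
as far from `y` as from `z`. -/
lemma popoviciu_of_mean_sub_eq {h : ℝ → ℝ}
    (hconc : ConcaveOn ℝ (Set.Ioo (0 : ℝ) 1) h)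
    (hsum : ∀ l ∈ Set.Ioo (0 : ℝ) 1, 1 ≤ h l + h (1 - l))
    {I : Set ℝ} {f : ℝ → ℝ} (hf0 : ∀ t ∈ I, 0 ≤ f t)
    (hfh : ∀ x ∈ I, ∀ y ∈ I, ∀ l ∈ Set.Ioo (0 : ℝ) 1,
      f ((1 - l) * x + l * y) ≤ h (1 - l) * f x + h l * f y)
    {x y z m u : ℝ} (hx : x ∈ I) (hy : y ∈ I) (hz : z ∈ I) (hm : m ∈ I)
    (hmean : x + y + z = 3 * m) (hu0 : 0 ≤ u) (hu : u ≤ 1 / 4)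
    (hmy : m - y = 2 * u * (z - m)) :
    f ((x + y) / 2) + f ((y + z) / 2) + f ((z + x) / 2) ≤
      max (h (1 / 2)) (2 * h (1 / 4)) * (f x + f y + f z) + 2 * h (3 / 4) * f m := by
  have hmid : ∀ a ∈ I, ∀ b ∈ I, f ((a + b) / 2) ≤ h (1 / 2) * (f a + f b) := by
    intro a ha b hb
    have := hfh a ha b hb (1 / 2) (by norm_num)
    rw [show (1 - 1 / 2) * a + 1 / 2 * b = (a + b) / 2 by ring,
      show (1 - 1 / 2 : ℝ) = 1 / 2 by norm_num] at this
    linarith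
  have hM1 := le_max_left (h (1 / 2)) (2 * h (1 / 4))
  have hM2 := le_max_right (h (1 / 2)) (2 * h (1 / 4))
  generalize max (h (1 / 2)) (2 * h (1 / 4)) = M at hM1 hM2 ⊢
  have fx := hf0 x hx
  have fy := hf0 y hy
  have fz := hf0 z hz
  have fm := hf0 m hm
  have hxy := hmid x hx y hy
  rcases hu0.eq_or_lt with rfl | hupos
  · obtain rfl : y = m := by linarith
    have hyz := hmid y hy z hz
    rw [show (z + x) / 2 = y by linarith]
    have hend := one_add_two_mul_half_le hconc hsum
    nlinarith [mul_le_mul_of_nonneg_right hM1 fx, mul_le_mul_of_nonneg_right hM1 fz,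
      mul_le_mul_of_nonneg_right hM2 fy, mul_le_mul_of_nonneg_right hend fy]
  · have hzx := hfh m hm z hz u ⟨hupos, by linarith⟩
    have hyz := hfh m hm z hz (1 / 2 - u) ⟨by linarith, by linarith⟩
    rw [show (1 - u) * m + u * z = (z + x) / 2 by linarith] at hzx
    rw [show (1 - (1 / 2 - u)) * m + (1 / 2 - u) * z = (y + z) / 2 by linarith] at hyz
    have hfar : h (1 - u) + h (1 - (1 / 2 - u)) ≤ 2 * h (3 / 4) :=
      hconc.add_le_two_mul_midpoint ⟨by linarith, by linarith⟩ ⟨by linarith, by linarith⟩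
        (by ring)
    have hnear : h u + h (1 / 2 - u) ≤ 2 * h (1 / 4) :=
      hconc.add_le_two_mul_midpoint ⟨by linarith, by linarith⟩ ⟨by linarith, by linarith⟩
        (by ring)
    nlinarith [mul_le_mul_of_nonneg_right hM1 fx, mul_le_mul_of_nonneg_right hM1 fy,
      mul_le_mul_of_nonneg_right (hnear.trans hM2) fz, mul_le_mul_of_nonneg_right hfar fm]

/-- The weight required by `popoviciu_of_mean_sub_eq`, expressed through distances. -/
lemma exists_weight_of_two_mul_abs_le {a b : ℝ} (hab : 0 ≤ a * b) (hle : 2 * |a| ≤ |b|) :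
    ∃ u : ℝ, 0 ≤ u ∧ u ≤ 1 / 4 ∧ a = 2 * u * b := by
  rcases eq_or_ne b 0 with rfl | hb
  · have : a = 0 := by
      rw [abs_zero] at hle
      exact abs_eq_zero.mp (le_antisymm (by linarith) (abs_nonneg a))
    exact ⟨0, le_rfl, by norm_num, by simp [this]⟩
  · have hb2 : 0 < b * b := mul_self_pos.mpr hb
    refine ⟨a * b / (2 * (b * b)), by positivity, ?_, by field_simp⟩
    rw [div_le_iff₀ (by positivity)]
    have : a * b ≤ |a| * |b| := by rw [← abs_mul]; exact le_abs_self _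
    nlinarith [abs_mul_abs_self b, abs_nonneg b]

/-- Popoviciu's inequality for ordered points. -/
lemma popoviciu_of_le_of_le {h : ℝ → ℝ}
    (hconc : ConcaveOn ℝ (Set.Ioo (0 : ℝ) 1) h)
    (hsum : ∀ l ∈ Set.Ioo (0 : ℝ) 1, 1 ≤ h l + h (1 - l))
    {I : Set ℝ} (hI : Convex ℝ I) {f : ℝ → ℝ} (hf0 : ∀ t ∈ I, 0 ≤ f t)
    (hfh : ∀ x ∈ I, ∀ y ∈ I, ∀ l ∈ Set.Ioo (0 : ℝ) 1,
      f ((1 - l) * x + l * y) ≤ h (1 - l) * f x + h l * f y)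
    {x y z : ℝ} (hx : x ∈ I) (hy : y ∈ I) (hz : z ∈ I) (hxy : x ≤ y) (hyz : y ≤ z) :
    f ((x + y) / 2) + f ((y + z) / 2) + f ((z + x) / 2) ≤
      max (h (1 / 2)) (2 * h (1 / 4)) * (f x + f y + f z) +
        2 * h (3 / 4) * f ((x + y + z) / 3) := by
  obtain ⟨m, hm⟩ : ∃ m, m = (x + y + z) / 3 := ⟨_, rfl⟩
  have hmI : m ∈ I := hI.ordConnected.out hx hz ⟨by linarith, by linarith⟩
  rw [← hm]
  rcases le_total y m with hym | hmy
  · obtain ⟨u, hu0, hu, hmu⟩ := exists_weight_of_two_mul_abs_le (a := m - y) (b := z - m)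
      (mul_nonneg (by linarith) (by linarith))
      (by rw [abs_of_nonneg (by linarith), abs_of_nonneg (by linarith)]; linarith)
    exact popoviciu_of_mean_sub_eq hconc hsum hf0 hfh hx hy hz hmI (by linarith) hu0 hu hmu
  · obtain ⟨u, hu0, hu, hmu⟩ := exists_weight_of_two_mul_abs_le (a := m - y) (b := x - m)
      (mul_nonneg_of_nonpos_of_nonpos (by linarith) (by linarith))
      (by rw [abs_of_nonpos (by linarith), abs_of_nonpos (by linarith)]; linarith)
    have := popoviciu_of_mean_sub_eq hconc hsum hf0 hfh hz hy hx hmI (by linarith) hu0 hu hmu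
    rw [add_comm z y, add_comm y x, add_comm x z] at this
    linarith

/-- Popoviciu's inequality for `h`-convex functions with `h` concave. -/
theorem popoviciu_h_convex (h : ℝ → ℝ)
    (hpos : ∀ l ∈ Set.Ioo (0 : ℝ) 1, 0 < h l)
    (hconc : ConcaveOn ℝ (Set.Ioo (0 : ℝ) 1) h)
    (hsum : ∀ l ∈ Set.Ioo (0 : ℝ) 1, 1 ≤ h l + h (1 - l))
    (I : Set ℝ) (hI : Convex ℝ I) (f : ℝ → ℝ)
    (hf0 : ∀ t ∈ I, 0 ≤ f t)
    (hfh : ∀ x ∈ I, ∀ y ∈ I, ∀ l ∈ Set.Ioo (0 : ℝ) 1,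
      f ((1 - l) * x + l * y) ≤ h (1 - l) * f x + h l * f y) :
    ∀ x ∈ I, ∀ y ∈ I, ∀ z ∈ I,
      max (h (1 / 2)) (2 * h (1 / 4)) * (f x + f y + f z) +
          2 * h (3 / 4) * f ((x + y + z) / 3) ≥
        f ((x + y) / 2) + f ((y + z) / 2) + f ((z + x) / 2) := by
  intro x hx y hy z hz
  have sorted {a b c : ℝ} (ha : a ∈ I) (hb : b ∈ I) (hc : c ∈ I) (hab : a ≤ b) (hbc : b ≤ c) :=
    popoviciu_of_le_of_le hconc hsum hI hf0 hfh ha hb hc hab hbc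
  rcases le_total x y with hxy | hxy <;> rcases le_total y z with hyz | hyz <;>
    rcases le_total x z with hxz | hxz
  · linarith [sorted hx hy hz hxy hyz]
  · linarith [sorted hx hy hz hxy hyz]
  · have := sorted hx hz hy hxz hyz
    ring_nf at this ⊢
    linarith
  · have := sorted hz hx hy hxz hxy
    ring_nf at this ⊢
    linarith
  · have := sorted hy hx hz hxy hxz
    ring_nf at this ⊢
    linarith
  · have := sorted hy hz hx hyz hxz
    ring_nf at this ⊢
    linarith
  · have := sorted hz hy hx hyz hxy
    ring_nf at this ⊢
    linarith
  · have := sorted hz hy hx hyz hxy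
    ring_nf at this ⊢
    linarith
end

section
/- For all real numbers x, y, z ≥ 0: x^(1/2) + y^(1/2) + z^(1/2) + √3·((x+y+z)/3)^(1/2) ≥ ((x+y)/2)^(1/2) + ((y+z)/2)^(1/2) + ((z+x)/2)^(1/2). -/
theorem sqrt_half_add_le {x y : ℝ} (hx : 0 ≤ x) (hy : 0 ≤ y) :
    Real.sqrt ((x + y) / 2) ≤ 3 / 4 * (Real.sqrt x + Real.sqrt y) := by
  apply Real.sqrt_le_iff.mpr
  refine ⟨by positivity, ?_⟩
  nlinarith [Real.sq_sqrt hx, Real.sq_sqrt hy, mul_nonneg (Real.sqrt_nonneg x) (Real.sqrt_nonneg y)]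

theorem sqrt_add_sqrt_add_sqrt_le {x y z : ℝ} (hx : 0 ≤ x) (hy : 0 ≤ y) (hz : 0 ≤ z) :
    Real.sqrt x + Real.sqrt y + Real.sqrt z ≤
      Real.sqrt 3 * Real.sqrt (x + y + z) := by
  rw [← Real.sqrt_mul (by norm_num)]
  apply Real.le_sqrt_of_sq_le
  nlinarith [Real.sq_sqrt hx, Real.sq_sqrt hy, Real.sq_sqrt hz,
    sq_nonneg (Real.sqrt x - Real.sqrt y), sq_nonneg (Real.sqrt y - Real.sqrt z),
    sq_nonneg (Real.sqrt z - Real.sqrt x)]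

/-- For nonnegative reals `x, y, z`:
`√x + √y + √z + √3 · √((x+y+z)/3) ≥ √((x+y)/2) + √((y+z)/2) + √((z+x)/2)`. -/
theorem popoviciu_sqrt_application (x y z : ℝ) (hx : 0 ≤ x) (hy : 0 ≤ y) (hz : 0 ≤ z) :
    Real.sqrt x + Real.sqrt y + Real.sqrt z +
        Real.sqrt 3 * Real.sqrt ((x + y + z) / 3) ≥
      Real.sqrt ((x + y) / 2) + Real.sqrt ((y + z) / 2) + Real.sqrt ((z + x) / 2) := by
  have hmean : Real.sqrt 3 * Real.sqrt ((x + y + z) / 3) = Real.sqrt (x + y + z) := by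
    rw [← Real.sqrt_mul (by norm_num)]
    congr 1
    ring
  have hthree : Real.sqrt 3 ≤ 2 := Real.sqrt_le_iff.mpr (by norm_num)
  have hsum : Real.sqrt x + Real.sqrt y + Real.sqrt z ≤ 2 * Real.sqrt (x + y + z) :=
    (sqrt_add_sqrt_add_sqrt_le hx hy hz).trans
      (mul_le_mul_of_nonneg_right hthree (Real.sqrt_nonneg _))
  linarith [sqrt_half_add_le hx hy, sqrt_half_add_le hy hz, sqrt_half_add_le hz hx]
end

section
/- Popoviciu-type inequality, supermultiplicative case: let h : (0,1) → (0,∞) satisfy h(λ)+h(1−λ) ≥ 1 for all λ ∈ (0,1), be supermultiplicative (h(xy) ≥ h(x)h(y) for all x, y ∈ (0,1) with xy ∈ (0,1)) with h(1/3) < 1, and let f : I → ℝ be a nonnegative h-convex function on an interval I ⊆ ℝ satisfying the Jensen-type inequality f((x₁+⋯+xₙ)/n) ≤ h(1/n)(f(x₁)+⋯+f(xₙ)). Then for all x, y, z ∈ I: f(x) + f(y) + f(z) − f((x+y+z)/3) ≥ ((1 − h(1/3))/(2·h(1/2)))·( f((x+y)/2) + f((y+z)/2) + f((z+x)/2) ).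 -/
/-- Popoviciu-type inequality for `h`-convex functions, supermultiplicative case. -/
theorem popoviciu_h_convex_supermultiplicative (h : ℝ → ℝ)
    (hpos : ∀ l ∈ Set.Ioo (0 : ℝ) 1, 0 < h l)
    (hsum : ∀ l ∈ Set.Ioo (0 : ℝ) 1, 1 ≤ h l + h (1 - l))
    (hsuper : ∀ x ∈ Set.Ioo (0 : ℝ) 1, ∀ y ∈ Set.Ioo (0 : ℝ) 1,
      x * y ∈ Set.Ioo (0 : ℝ) 1 → h x * h y ≤ h (x * y))
    (hthird : h (1 / 3) < 1)
    (I : Set ℝ) (hI : Convex ℝ I) (f : ℝ → ℝ)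
    (hf0 : ∀ t ∈ I, 0 ≤ f t)
    (hfh : ∀ x ∈ I, ∀ y ∈ I, ∀ l ∈ Set.Ioo (0 : ℝ) 1,
      f ((1 - l) * x + l * y) ≤ h (1 - l) * f x + h l * f y)
    (hjensen : ∀ n : ℕ, 1 ≤ n → ∀ x : Fin n → ℝ, (∀ i, x i ∈ I) →
      f ((∑ i, x i) / n) ≤ h (1 / n) * ∑ i, f (x i)) :
    ∀ x ∈ I, ∀ y ∈ I, ∀ z ∈ I,
      f x + f y + f z - f ((x + y + z) / 3) ≥
        ((1 - h (1 / 3)) / (2 * h (1 / 2))) *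
          (f ((x + y) / 2) + f ((y + z) / 2) + f ((z + x) / 2)) := by
  intro x hx y hy z hz
  have half_pos : 0 < h (1 / 2) := hpos _ (by norm_num)
  have midpoint_le : ∀ a ∈ I, ∀ b ∈ I, f ((a + b) / 2) ≤ h (1 / 2) * (f a + f b) := by
    intro a ha b hb
    have key := hfh a ha b hb (1 / 2) (by norm_num)
    rw [show (1 - 1 / 2 : ℝ) = 1 / 2 by norm_num] at key
    rw [show (a + b) / 2 = 1 / 2 * a + 1 / 2 * b by ring]
    linarith
  have centroid_le : f ((x + y + z) / 3) ≤ h (1 / 3) * (f x + f y + f z) := by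
    have key := hjensen 3 (by norm_num) ![x, y, z] (by simp [Fin.forall_fin_succ, hx, hy, hz])
    simpa [Fin.sum_univ_three] using key
  have midpoints_le : f ((x + y) / 2) + f ((y + z) / 2) + f ((z + x) / 2) ≤
      (f x + f y + f z) * (2 * h (1 / 2)) := by
    linarith [midpoint_le x hx y hy, midpoint_le y hy z hz, midpoint_le z hz x hx]
  rw [ge_iff_le, div_mul_eq_mul_div, div_le_iff₀ (by positivity)]
  calc (1 - h (1 / 3)) * (f ((x + y) / 2) + f ((y + z) / 2) + f ((z + x) / 2))
      ≤ (1 - h (1 / 3)) * ((f x + f y + f z) * (2 * h (1 / 2))) :=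
        mul_le_mul_of_nonneg_left midpoints_le (by linarith)
    _ = (f x + f y + f z - h (1 / 3) * (f x + f y + f z)) * (2 * h (1 / 2)) := by ring
    _ ≤ (f x + f y + f z - f ((x + y + z) / 3)) * (2 * h (1 / 2)) := by gcongr
end

section
/- For all real numbers x, y, z ≥ 0: x^(1/2) + y^(1/2) + z^(1/2) − ((x+y+z)/3)^(1/2) ≥ ((1 − (1/3)^(1/2))/(2·(1/2)^(1/2)))·( ((x+y)/2)^(1/2) + ((y+z)/2)^(1/2) + ((z+x)/2)^(1/2) ). -/
/-- The square root is subadditive, in the form scaled by a constant `c ≥ 0`. -/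
theorem sqrt_mul_add_le {c : ℝ} (hc : 0 ≤ c) {x y : ℝ} (hx : 0 ≤ x) (hy : 0 ≤ y) :
    Real.sqrt (c * (x + y)) ≤ Real.sqrt c * (Real.sqrt x + Real.sqrt y) := by
  rw [Real.sqrt_mul hc]
  refine mul_le_mul_of_nonneg_left (Real.sqrt_le_iff.2 ⟨by positivity, ?_⟩) (Real.sqrt_nonneg c)
  nlinarith [Real.sq_sqrt hx, Real.sq_sqrt hy,
    mul_nonneg (Real.sqrt_nonneg x) (Real.sqrt_nonneg y)]

/-- For nonnegative reals `x, y, z`: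
`√x + √y + √z − √((x+y+z)/3) ≥ ((1−√(1/3))/(2√(1/2)))(√((x+y)/2)+√((y+z)/2)+√((z+x)/2))`. -/
theorem popoviciu_sqrt_application' (x y z : ℝ) (hx : 0 ≤ x) (hy : 0 ≤ y) (hz : 0 ≤ z) :
    Real.sqrt x + Real.sqrt y + Real.sqrt z - Real.sqrt ((x + y + z) / 3) ≥
      ((1 - Real.sqrt (1 / 3)) / (2 * Real.sqrt (1 / 2))) *
        (Real.sqrt ((x + y) / 2) + Real.sqrt ((y + z) / 2) + Real.sqrt ((z + x) / 2)) := by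
  have half_pos : 0 < Real.sqrt (1 / 2) := by positivity
  have third_le : Real.sqrt (1 / 3) ≤ 1 := Real.sqrt_le_one.2 (by norm_num)
  have pair_le {u v : ℝ} (hu : 0 ≤ u) (hv : 0 ≤ v) :
      Real.sqrt ((u + v) / 2) ≤ Real.sqrt (1 / 2) * (Real.sqrt u + Real.sqrt v) := by
    convert sqrt_mul_add_le (by norm_num : (0 : ℝ) ≤ 1 / 2) hu hv using 2
    ring
  have mean_le : Real.sqrt ((x + y + z) / 3) ≤
      Real.sqrt (1 / 3) * (Real.sqrt x + Real.sqrt y + Real.sqrt z) := by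
    have outer := sqrt_mul_add_le (by norm_num : (0 : ℝ) ≤ 1 / 3) (add_nonneg hx hy) hz
    have inner := sqrt_mul_add_le zero_le_one hx hy
    rw [Real.sqrt_one, one_mul, one_mul] at inner
    rw [show (x + y + z) / 3 = 1 / 3 * (x + y + z) by ring]
    exact outer.trans (by gcongr)
  calc ((1 - Real.sqrt (1 / 3)) / (2 * Real.sqrt (1 / 2))) *
        (Real.sqrt ((x + y) / 2) + Real.sqrt ((y + z) / 2) + Real.sqrt ((z + x) / 2))
      ≤ ((1 - Real.sqrt (1 / 3)) / (2 * Real.sqrt (1 / 2))) *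
        (2 * Real.sqrt (1 / 2) * (Real.sqrt x + Real.sqrt y + Real.sqrt z)) := by
        refine mul_le_mul_of_nonneg_left ?_ (div_nonneg (sub_nonneg.2 third_le) (by positivity))
        linarith [pair_le hx hy, pair_le hy hz, pair_le hz hx]
    _ = (1 - Real.sqrt (1 / 3)) * (Real.sqrt x + Real.sqrt y + Real.sqrt z) := by
        rw [← mul_assoc, div_mul_cancel₀ _ (by positivity)]
    _ ≤ Real.sqrt x + Real.sqrt y + Real.sqrt z - Real.sqrt ((x + y + z) / 3) := by
        linarith
end
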